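/- For every 2D elasticity tensor C, the invariants I₂ = Σᵢⱼ (d'(C) i j)², J₂ = Σᵢⱼₖₗ (H(C) i j k l)², and K₃ = Σᵢⱼₖₗ d(C) i j · H(C) i j k l · d(C) k l satisfy the inequality 2·K₃² ≤ J₂·I₂². (This makes the quantity √(J₂·I₂² − 2K₃²)/I₂ a well-defined real number whenever d'(C) ≠ 0.) -/

import Mathlib

open Finset

noncomputable section

/-- A fourth-order tensor on `ℝ²`. -/
abbrev Tens4 := Fin 2 → Fin 2 → Fin 2 → Fin 2 → ℝ

/-- Kronecker delta on `Fin 2`. -/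
def kdelta (i j : Fin 2) : ℝ := if i = j then 1 else 0

/-- The isotropic fourth-order tensor `J`. -/
def Jten (i j k l : Fin 2) : ℝ :=
  (kdelta i k * kdelta j l + kdelta i l * kdelta j k) / 2 - kdelta i j * kdelta k l / 2

/-- A 2D elasticity tensor: minor and major index symmetries. -/
def IsElas (C : Tens4) : Prop :=
  (∀ i j k l, C i j k l = C j i k l) ∧ (∀ i j k l, C i j k l = C i j l k) ∧
    (∀ i j k l, C i j k l = C k l i j)

/-- Dilatation tensor `d(C)ᵢⱼ = Σₖ C k k i j`. -/
def dil (C : Tens4) (i j : Fin 2) : ℝ := ∑ k, C k k i j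

/-- Voigt tensor `v(C)ᵢⱼ = Σₖ C k i k j`. -/
def voigt (C : Tens4) (i j : Fin 2) : ℝ := ∑ k, C k i k j

/-- Shear modulus `μ(C)`. -/
def muC (C : Tens4) : ℝ := (2 * ∑ i, voigt C i i - ∑ i, dil C i i) / 8

/-- 2D bulk modulus `κ(C)`. -/
def kappaC (C : Tens4) : ℝ := (∑ i, dil C i i) / 4

/-- Deviatoric part `d'(C)` of the dilatation tensor. -/
def devC (C : Tens4) (i j : Fin 2) : ℝ := dil C i j - (∑ k, dil C k k) / 2 * kdelta i j

/-- Harmonic (fourth-order) part `H(C)` of the elasticity tensor. -/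
def harmC (C : Tens4) (i j k l : Fin 2) : ℝ :=
  C i j k l - 2 * muC C * Jten i j k l - kappaC C * kdelta i j * kdelta k l
    - (kdelta i j * devC C k l + devC C i j * kdelta k l) / 2

/-- A 2D harmonic fourth-order tensor: totally symmetric (invariant under all
permutations of its four indices) and traceless. -/
def IsHarmonic (H : Tens4) : Prop :=
  (∀ (σ : Equiv.Perm (Fin 4)) (v : Fin 4 → Fin 2),
      H (v (σ 0)) (v (σ 1)) (v (σ 2)) (v (σ 3)) = H (v 0) (v 1) (v 2) (v 3)) ∧
    (∀ i j : Fin 2, ∑ k, H k k i j = 0)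

/-- Invariant `I₂ = ‖d'(C)‖²`. -/
def I2 (C : Tens4) : ℝ := ∑ i, ∑ j, (devC C i j) ^ 2

/-- Invariant `J₂ = ‖H(C)‖²`. -/
def J2 (C : Tens4) : ℝ := ∑ i, ∑ j, ∑ k, ∑ l, (harmC C i j k l) ^ 2

/-- Invariant `K₃ = d(C) : H(C) : d(C)`. -/
def K3 (C : Tens4) : ℝ :=
  ∑ i, ∑ j, ∑ k, ∑ l, dil C i j * harmC C i j k l * dil C k l

/-!
On the plane of symmetric traceless 2-tensors `J` is the identity, and the harmonic part `H` is
orthogonal to `J`. As `H` is also trace-free in its first and its last pair of indices, `d` can be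
replaced by `d'` in `K₃ = d : H : d`, and then `d' ⊗ d'` by its harmonic part
`d' * d' = d' ⊗ d' - (‖d'‖² / 2) J`. Since `‖d' * d'‖² = ‖d'‖⁴ / 2`, the claim is the
Cauchy–Schwarz inequality for `H` and `d' * d'`.
-/

section FullContraction

variable {ι : Type*} [Fintype ι]

/-- The full contraction `A :: B` of fourth-order tensors, that is, their Euclidean inner product
in components. -/
def fullContraction (A B : ι → ι → ι → ι → ℝ) : ℝ :=
  ∑ i, ∑ j, ∑ k, ∑ l, A i j k l * B i j k l

/-- The tensor square `a ⊗ a` of a second-order tensor. -/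
def tensorSquare (a : ι → ι → ℝ) (i j k l : ι) : ℝ := a i j * a k l

theorem fullContraction_comm (A B : ι → ι → ι → ι → ℝ) :
    fullContraction A B = fullContraction B A := by
  simp only [fullContraction, mul_comm]

theorem fullContraction_sub_smul_right (A B E : ι → ι → ι → ι → ℝ) (c : ℝ) :
    fullContraction A (B - c • E) = fullContraction A B - c * fullContraction A E := by
  simp only [fullContraction, Pi.sub_apply, Pi.smul_apply, smul_eq_mul, mul_sub, sum_sub_distrib,
    mul_sum, mul_left_comm]

theorem fullContraction_sq_le (A B : ι → ι → ι → ι → ℝ) :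
    fullContraction A B ^ 2 ≤ fullContraction A A * fullContraction B B := by
  simpa only [fullContraction, Fintype.sum_prod_type, sq] using
    sum_mul_sq_le_sq_mul_sq univ (fun p : ι × ι × ι × ι ↦ A p.1 p.2.1 p.2.2.1 p.2.2.2)
      (fun p ↦ B p.1 p.2.1 p.2.2.1 p.2.2.2)

theorem fullContraction_tensorSquare_self (a : ι → ι → ℝ) :
    fullContraction (tensorSquare a) (tensorSquare a) = (∑ i, ∑ j, a i j ^ 2) ^ 2 := by
  simp only [fullContraction, tensorSquare, ← sq, mul_pow, ← mul_sum, ← sum_mul]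

end FullContraction

theorem kdelta_self (i : Fin 2) : kdelta i i = 1 := if_pos rfl

theorem fullContraction_tensorSquare_sub_kdelta {H : Tens4} (hleft : ∀ i j, ∑ k, H k k i j = 0)
    (hright : ∀ i j, ∑ k, H i j k k = 0) (a : Fin 2 → Fin 2 → ℝ) (c : ℝ) :
    fullContraction H (tensorSquare fun i j ↦ a i j - c * kdelta i j) =
      fullContraction H (tensorSquare a) := by
  simp only [Fin.sum_univ_two] at hleft hright
  simp only [fullContraction, tensorSquare, kdelta, Fin.sum_univ_two, Fin.isValue, reduceIte,
    zero_ne_one, one_ne_zero]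
  linear_combination
    -c * (a 0 0 * hright 0 0 + a 0 1 * hright 0 1 + a 1 0 * hright 1 0 + a 1 1 * hright 1 1)
      - c * (a 0 0 * hleft 0 0 + a 0 1 * hleft 0 1 + a 1 0 * hleft 1 0 + a 1 1 * hleft 1 1)
      + c ^ 2 * (hleft 0 0 + hleft 1 1)

theorem fullContraction_Jten (A : Tens4) :
    fullContraction A Jten =
      ((∑ i, ∑ j, A i j i j) + (∑ i, ∑ j, A i j j i) - ∑ i, ∑ j, A i i j j) / 2 := by
  simp only [fullContraction, Jten, kdelta, Fin.sum_univ_two, Fin.isValue, reduceIte, zero_ne_one,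
    one_ne_zero]
  ring

theorem fullContraction_Jten_self : fullContraction Jten Jten = 2 := by
  norm_num [fullContraction_Jten, Jten, kdelta]

theorem Jten_swap (i j k l : Fin 2) : Jten i j k l = Jten k l i j := by
  simp only [Jten, kdelta, eq_comm]
  ring

theorem sum_Jten_left (i j : Fin 2) : ∑ k, Jten k k i j = 0 := by
  fin_cases i <;> fin_cases j <;> norm_num [Jten, kdelta]

section HarmonicSquare

variable {a : Fin 2 → Fin 2 → ℝ}

/-- The harmonic square `a * a = a ⊗ a - (‖a‖² / 2) J`, which is the harmonic part of `a ⊗ a` when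
`a` is symmetric and traceless. -/
def harmonicSquare (a : Fin 2 → Fin 2 → ℝ) : Tens4 :=
  tensorSquare a - ((∑ i, ∑ j, a i j ^ 2) / 2) • Jten

theorem fullContraction_harmonicSquare {A : Tens4} (hA : fullContraction A Jten = 0)
    (a : Fin 2 → Fin 2 → ℝ) :
    fullContraction A (harmonicSquare a) = fullContraction A (tensorSquare a) := by
  rw [harmonicSquare, fullContraction_sub_smul_right, hA, mul_zero, sub_zero]

theorem fullContraction_tensorSquare_Jten (hsymm : ∀ i j, a i j = a j i)
    (htrace : ∑ k, a k k = 0) :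
    fullContraction (tensorSquare a) Jten = ∑ i, ∑ j, a i j ^ 2 := by
  have hsq : ∑ i, ∑ j, a i j * a j i = ∑ i, ∑ j, a i j ^ 2 :=
    sum_congr rfl fun i _ ↦ sum_congr rfl fun j _ ↦ by rw [hsymm j i, sq]
  have htrace_sq : ∑ i, ∑ j, a i i * a j j = 0 := by rw [← sum_mul_sum, htrace, zero_mul]
  simp only [fullContraction_Jten, tensorSquare, ← sq, hsq, htrace_sq]
  ring

theorem fullContraction_harmonicSquare_Jten (hsymm : ∀ i j, a i j = a j i)
    (htrace : ∑ k, a k k = 0) :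
    fullContraction (harmonicSquare a) Jten = 0 := by
  rw [fullContraction_comm, harmonicSquare, fullContraction_sub_smul_right, fullContraction_comm,
    fullContraction_tensorSquare_Jten hsymm htrace, fullContraction_Jten_self]
  ring

theorem fullContraction_harmonicSquare_self (hsymm : ∀ i j, a i j = a j i)
    (htrace : ∑ k, a k k = 0) :
    fullContraction (harmonicSquare a) (harmonicSquare a) = (∑ i, ∑ j, a i j ^ 2) ^ 2 / 2 := by
  rw [fullContraction_harmonicSquare (fullContraction_harmonicSquare_Jten hsymm htrace),
    fullContraction_comm, harmonicSquare, fullContraction_sub_smul_right,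
    fullContraction_tensorSquare_self, fullContraction_tensorSquare_Jten hsymm htrace]
  ring

end HarmonicSquare

theorem two_mul_fullContraction_tensorSquare_sq_le {A : Tens4} {a : Fin 2 → Fin 2 → ℝ}
    (hA : fullContraction A Jten = 0) (hsymm : ∀ i j, a i j = a j i) (htrace : ∑ k, a k k = 0) :
    2 * fullContraction A (tensorSquare a) ^ 2 ≤
      fullContraction A A * (∑ i, ∑ j, a i j ^ 2) ^ 2 := by
  have hCS := fullContraction_sq_le A (harmonicSquare a)
  rw [fullContraction_harmonicSquare hA, fullContraction_harmonicSquare_self hsymm htrace] at hCS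
  linarith

section ElasticityTensor

variable {C : Tens4}

theorem devC_symm (hminor : ∀ i j k l, C i j k l = C i j l k) (i j : Fin 2) :
    devC C i j = devC C j i := by
  simp only [devC, dil, kdelta, hminor _ _ i j, eq_comm (a := i)]

theorem sum_devC_self (C : Tens4) : ∑ i, devC C i i = 0 := by
  simp only [devC, kdelta_self, Fin.sum_univ_two]
  ring

theorem sum_harmC_left (C : Tens4) (i j : Fin 2) : ∑ k, harmC C k k i j = 0 := by
  have htraces : ∑ k, harmC C k k i j =
      dil C i j - 2 * muC C * ∑ k, Jten k k i j - 2 * kappaC C * kdelta i j - devC C i j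
        - kdelta i j / 2 * ∑ k, devC C k k := by
    simp only [harmC, dil, Fin.sum_univ_two, kdelta_self]
    ring
  rw [htraces, sum_Jten_left, sum_devC_self, kappaC, devC]
  ring

theorem sum_harmC_right (hdil : ∀ i j, ∑ k, C i j k k = dil C i j) (i j : Fin 2) :
    ∑ k, harmC C i j k k = 0 := by
  have hswap : ∑ k, harmC C i j k k - ∑ k, harmC C k k i j = ∑ k, C i j k k - dil C i j := by
    simp only [dil, ← sum_sub_distrib]
    refine sum_congr rfl fun k _ ↦ ?_
    rw [harmC, harmC, Jten_swap i j]
    ring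
  rwa [sum_harmC_left, hdil, sub_self, sub_zero] at hswap

theorem fullContraction_Jten_eq_four_mul_muC (hminor : ∀ i j k l, C i j k l = C i j l k) :
    fullContraction C Jten = 4 * muC C := by
  have hvoigt : ∑ i, ∑ j, C i j i j = ∑ i, voigt C i i := sum_comm
  have hdil : ∑ i, ∑ j, C i i j j = ∑ i, dil C i i := sum_comm
  have hflip : ∑ i, ∑ j, C i j j i = ∑ i, ∑ j, C i j i j :=
    sum_congr rfl fun i _ ↦ sum_congr rfl fun j _ ↦ hminor i j j i
  rw [fullContraction_Jten, hflip, hvoigt, hdil, muC]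
  ring

theorem fullContraction_harmC_Jten (hminor : ∀ i j k l, C i j k l = C i j l k) :
    fullContraction (harmC C) Jten = 0 := by
  have hJ : fullContraction (harmC C) Jten =
      fullContraction C Jten - 2 * muC C * fullContraction Jten Jten := by
    simp only [fullContraction_Jten, harmC, kdelta, Fin.sum_univ_two, Fin.isValue, reduceIte,
      zero_ne_one, one_ne_zero]
    ring
  rw [hJ, fullContraction_Jten_eq_four_mul_muC hminor, fullContraction_Jten_self]
  ring

theorem J2_eq_fullContraction (C : Tens4) : J2 C = fullContraction (harmC C) (harmC C) := by
  simp only [J2, fullContraction, sq]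

theorem K3_eq_fullContraction_dil (C : Tens4) :
    K3 C = fullContraction (harmC C) (tensorSquare (dil C)) := by
  simp only [K3, fullContraction, tensorSquare, mul_left_comm, mul_assoc]

theorem K3_eq_fullContraction_devC (hdil : ∀ i j, ∑ k, C i j k k = dil C i j) :
    K3 C = fullContraction (harmC C) (tensorSquare (devC C)) := by
  rw [K3_eq_fullContraction_dil]
  exact (fullContraction_tensorSquare_sub_kdelta (sum_harmC_left C) (sum_harmC_right hdil)
    (dil C) _).symm

theorem invariants_inequality_general (hminor : ∀ i j k l, C i j k l = C i j l k)
    (hdil : ∀ i j, ∑ k, C i j k k = dil C i j) :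
    2 * (K3 C) ^ 2 ≤ J2 C * (I2 C) ^ 2 := by
  rw [K3_eq_fullContraction_devC hdil, J2_eq_fullContraction, I2]
  exact two_mul_fullContraction_tensorSquare_sq_le (fullContraction_harmC_Jten hminor)
    (devC_symm hminor) (sum_devC_self C)

end ElasticityTensor

/-- For every 2D elasticity tensor, `2K₃² ≤ J₂ I₂²`. -/
theorem invariants_inequality (C : Tens4) (hC : IsElas C) :
    2 * (K3 C) ^ 2 ≤ J2 C * (I2 C) ^ 2 := by
  obtain ⟨-, hminor, hmajor⟩ := hC
  exact invariants_inequality_general hminor fun i j ↦ sum_congr rfl fun k _ ↦ hmajor i j k k
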